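/- arXiv:2103.16458 — 3 statements merged into one kernel-verified Lean document; each statement's English description precedes it below -/
import Mathlib

section
/- Let k ≥ 1 be an integer and define h_k : ℂ∖{0} → ℝ by h_k(z) = k²·|z|^{2(k−1)}·(1 + |z|^{2k}·u(|z|^{2k})²). Then, as z → 0 with z ∈ ℂ∖{0}, each of the quantities (∂h_k)(z)/h_k(z)³, (∂̄h_k)(z)/h_k(z)³, and (∂∂̄h_k)(z)/h_k(z)³ tends to 0. -/
open Complex Filter Topology Metric
open scoped ComplexOrder

/-- The function `u(t) = (t-1)/(t log t)` for `t ≠ 1`, extended by `u(1) = 1`. -/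
noncomputable def u (t : ℝ) : ℝ := if t = 1 then 1 else (t - 1) / (t * Real.log t)

/-- Wirtinger derivative `∂g` of a complex-valued function on `ℂ` (real-differentiable sense). -/
noncomputable def wdz (g : ℂ → ℂ) (z : ℂ) : ℂ :=
  (fderiv ℝ g z 1 - Complex.I * fderiv ℝ g z Complex.I) / 2

/-- Wirtinger derivative `∂̄g` of a complex-valued function on `ℂ`. -/
noncomputable def wdzbar (g : ℂ → ℂ) (z : ℂ) : ℂ :=
  (fderiv ℝ g z 1 + Complex.I * fderiv ℝ g z Complex.I) / 2

/-- `∂h` for a real-valued `h`. -/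
noncomputable def wdzR (h : ℂ → ℝ) : ℂ → ℂ := wdz fun w => (h w : ℂ)

/-- `∂̄h` for a real-valued `h`. -/
noncomputable def wdzbarR (h : ℂ → ℝ) : ℂ → ℂ := wdzbar fun w => (h w : ℂ)

/-- `∂∂̄h` for a real-valued `h`. -/
noncomputable def wlapR (h : ℂ → ℝ) : ℂ → ℂ := wdz (wdzbarR h)

/-- The numerator `h·∂∂̄h − ∂h·∂̄h` of (−1/2 times) the Gaussian curvature of `h|dz|²`. -/
noncomputable def curvNum (h : ℂ → ℝ) (z : ℂ) : ℂ :=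
  (h z : ℂ) * wlapR h z - wdzR h z * wdzbarR h z

/-- The Gaussian curvature `K = −2(h·∂∂̄h − ∂h·∂̄h)/h³` of the conformal metric `h|dz|²`. -/
noncomputable def gaussCurv (h : ℂ → ℝ) (z : ℂ) : ℂ :=
  -2 * curvNum h z / (h z : ℂ) ^ 3

noncomputable def q0 (k p m : ℝ) : ℝ := k ^ 2 * p + (1 - p) ^ 2 * m ^ 2

noncomputable def q1 (k p m : ℝ) : ℝ :=
  k ^ 3 * p - 2 * k * p * (1 - p) * m ^ 2 - 2 * (1 - p) ^ 2 * m ^ 3 - k ^ 2 * p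
    - (1 - p) ^ 2 * m ^ 2

noncomputable def q2 (k p m : ℝ) : ℝ :=
  k * p * (k ^ 3 - k ^ 2 - 2 * k * (1 - 2 * p) * m ^ 2 + 4 * (1 - p) * m ^ 3 + 2 * (1 - p) * m ^ 2)
    - m ^ 2 * (-4 * k * p * (1 - p) * m - 6 * (1 - p) ^ 2 * m ^ 2 - 2 * (1 - p) ^ 2 * m)
    - 2 * q1 k p m

lemma hd_p (k : ℕ) (s : ℝ) (hs : s ≠ 0) :
    HasDerivAt (fun s : ℝ => s ^ k) (k * s ^ k / s) s := by
  refine (hasDerivAt_pow k s).congr_deriv ?_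
  rcases k with _ | k
  · simp
  · simp only [Nat.add_sub_cancel]
    field_simp
    ring

lemma hd_m (s : ℝ) (hs : s ≠ 0) (hl : Real.log s ≠ 0) :
    HasDerivAt (fun s : ℝ => (Real.log s)⁻¹) (-((Real.log s)⁻¹) ^ 2 / s) s := by
  refine ((Real.hasDerivAt_log hs).inv hl).congr_deriv ?_
  field_simp

lemma hd_0 (k : ℕ) (s : ℝ) (hs : s ≠ 0) (hl : Real.log s ≠ 0) :
    HasDerivAt (fun s : ℝ => q0 k (s ^ k) (Real.log s)⁻¹ / s)
      (q1 k (s ^ k) (Real.log s)⁻¹ / s ^ 2) s := by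
  have hp := hd_p k s hs
  have hm := hd_m s hs hl
  have h := ((hp.const_mul ((k : ℝ) ^ 2)).add
    (((hp.const_sub 1).pow 2).mul (hm.pow 2))).div (hasDerivAt_id s) hs
  unfold q0 q1
  refine h.congr_deriv ?_
  simp only [id, Pi.add_apply, Pi.mul_apply, Pi.pow_apply]
  generalize (Real.log s)⁻¹ = m
  generalize s ^ k = p
  field_simp
  push_cast
  ring

lemma hd_1 (k : ℕ) (s : ℝ) (hs : s ≠ 0) (hl : Real.log s ≠ 0) :
    HasDerivAt (fun s : ℝ => q1 k (s ^ k) (Real.log s)⁻¹ / s ^ 2)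
      (q2 k (s ^ k) (Real.log s)⁻¹ / s ^ 3) s := by
  have hp := hd_p k s hs
  have hm := hd_m s hs hl
  have hp1 := hp.const_sub 1
  have h := ((((((hp.const_mul ((k : ℝ) ^ 3)).sub
    (((hp.const_mul (2 * (k : ℝ))).mul hp1).mul (hm.pow 2))).sub
    (((hp1.pow 2).const_mul 2).mul (hm.pow 3)))).sub (hp.const_mul ((k : ℝ) ^ 2))).sub
    ((hp1.pow 2).mul (hm.pow 2))).div ((hasDerivAt_id s).pow 2) (pow_ne_zero 2 hs)
  unfold q2 q1
  refine h.congr_deriv ?_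
  simp only [id, Pi.add_apply, Pi.sub_apply, Pi.mul_apply, Pi.pow_apply]
  generalize (Real.log s)⁻¹ = m
  generalize s ^ k = p
  field_simp
  push_cast
  ring

lemma hf_nsq (z : ℂ) : HasFDerivAt (fun w : ℂ => ‖w‖ ^ 2) (2 • (innerSL ℝ z)) z :=
  (hasStrictFDerivAt_norm_sq z).hasFDerivAt

lemma hf_comp (H : ℝ → ℝ) (H' : ℝ) (z : ℂ) (h : HasDerivAt H H' (‖z‖ ^ 2)) :
    HasFDerivAt (fun w : ℂ => ((H (‖w‖ ^ 2) : ℝ) : ℂ))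
      (Complex.ofRealCLM.comp (H' • (2 • (innerSL ℝ z)))) z := by
  have h1 : HasFDerivAt (fun w : ℂ => H (‖w‖ ^ 2)) (H' • (2 • (innerSL ℝ z))) z :=
    h.comp_hasFDerivAt z (hf_nsq z)
  exact Complex.ofRealCLM.hasFDerivAt.comp z h1

lemma wdz_comp (H : ℝ → ℝ) (H' : ℝ) (z : ℂ) (h : HasDerivAt H H' (‖z‖ ^ 2)) :
    wdz (fun w : ℂ => ((H (‖w‖ ^ 2) : ℝ) : ℂ)) z = H' * (starRingEnd ℂ) z := by
  unfold wdz
  rw [(hf_comp H H' z h).fderiv]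
  apply Complex.ext <;> simp [Complex.inner] <;> ring

lemma wdzbar_comp (H : ℝ → ℝ) (H' : ℝ) (z : ℂ) (h : HasDerivAt H H' (‖z‖ ^ 2)) :
    wdzbar (fun w : ℂ => ((H (‖w‖ ^ 2) : ℝ) : ℂ)) z = H' * z := by
  unfold wdzbar
  rw [(hf_comp H H' z h).fderiv]
  apply Complex.ext <;> simp [Complex.inner] <;> ring

lemma wdz_comp_mul (H : ℝ → ℝ) (H' : ℝ) (z : ℂ) (h : HasDerivAt H H' (‖z‖ ^ 2)) :
    wdz (fun w : ℂ => ((H (‖w‖ ^ 2) : ℝ) : ℂ) * w) z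
      = ((H (‖z‖ ^ 2) + ‖z‖ ^ 2 * H' : ℝ) : ℂ) := by
  unfold wdz
  have h2 := (hf_comp H H' z h).mul (hasFDerivAt_id (𝕜 := ℝ) z)
  have h3 : fderiv ℝ (fun w : ℂ => ((H (‖w‖ ^ 2) : ℝ) : ℂ) * w) z = _ := h2.fderiv
  rw [h3]
  have hn : ‖z‖ ^ 2 = z.re * z.re + z.im * z.im := by
    rw [← Complex.normSq_eq_norm_sq, Complex.normSq_apply]
  generalize H (‖z‖ ^ 2) = a
  rw [hn]
  apply Complex.ext <;> simp [Complex.inner] <;> ring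

lemma good_ev : ∀ᶠ z : ℂ in 𝓝[≠] (0 : ℂ), z ≠ 0 ∧ ‖z‖ < 1 := by
  refine (eventually_mem_nhdsWithin).and ?_
  apply eventually_nhdsWithin_of_eventually_nhds
  have : Tendsto (fun z : ℂ => ‖z‖) (𝓝 0) (𝓝 0) := by simpa using (continuous_norm (E := ℂ)).tendsto 0
  exact this.eventually (gt_mem_nhds one_pos)

lemma good_nhds {z : ℂ} (h : z ≠ 0 ∧ ‖z‖ < 1) : ∀ᶠ w in 𝓝 z, w ≠ 0 ∧ ‖w‖ < 1 :=
  (isOpen_ne.eventually_mem h.1).and ((isOpen_lt continuous_norm continuous_const).eventually_mem h.2)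

lemma good_s {z : ℂ} (h : z ≠ 0 ∧ ‖z‖ < 1) : ‖z‖ ^ 2 ≠ 0 ∧ Real.log (‖z‖ ^ 2) ≠ 0 := by
  have h0 : 0 < ‖z‖ := norm_pos_iff.2 h.1
  have h1 : ‖z‖ ^ 2 < 1 := by nlinarith [h.2]
  exact ⟨by positivity, (Real.log_neg (by positivity) h1).ne⟩

lemma h_eq (k : ℕ) (hk : 1 ≤ k) (z : ℂ) (h : z ≠ 0 ∧ ‖z‖ < 1) :
    (k : ℝ) ^ 2 * ‖z‖ ^ (2 * (k - 1)) *
        (1 + ‖z‖ ^ (2 * k) * u (‖z‖ ^ (2 * k)) ^ 2)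
      = q0 k ((‖z‖ ^ 2) ^ k) (Real.log (‖z‖ ^ 2))⁻¹ / ‖z‖ ^ 2 := by
  obtain ⟨hs, hl⟩ := good_s h
  have h0 : 0 < ‖z‖ := norm_pos_iff.2 h.1
  have h1 : ‖z‖ ^ 2 < 1 := by nlinarith [h.2]
  rw [pow_mul, pow_mul]
  have hs0 : 0 < ‖z‖ ^ 2 := by positivity
  generalize ‖z‖ ^ 2 = s at *
  have hne : s ^ k ≠ 1 := (pow_lt_one₀ hs0.le h1 (by omega)).ne
  unfold u q0
  rw [if_neg hne, Real.log_pow]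
  have hk0 : (k : ℝ) ≠ 0 := by positivity
  obtain ⟨j, rfl⟩ : ∃ j, k = j + 1 := ⟨k - 1, by omega⟩
  simp only [Nat.add_sub_cancel]
  have hj : s ^ j ≠ 0 := pow_ne_zero _ hs
  rw [pow_succ s j]
  generalize Real.log s = l at *
  generalize s ^ j = r at *
  field_simp
  ring

lemma lim_s : Tendsto (fun z : ℂ => ‖z‖ ^ 2) (𝓝[≠] (0 : ℂ)) (𝓝[>] (0 : ℝ)) := by
  apply tendsto_nhdsWithin_of_tendsto_nhds_of_eventually_within
  · have : Tendsto (fun z : ℂ => ‖z‖ ^ 2) (𝓝 0) (𝓝 0) := by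
      exact Continuous.tendsto' (by fun_prop) 0 0 (by simp)
    exact this.mono_left nhdsWithin_le_nhds
  · filter_upwards [good_ev] with z hz
    have h0 : 0 < ‖z‖ := norm_pos_iff.2 hz.1
    exact pow_pos h0 2

lemma lim_log (n j : ℕ) (hj : 1 ≤ j) :
    Tendsto (fun s : ℝ => s ^ j * Real.log s ^ n) (𝓝[>] (0 : ℝ)) (𝓝 0) := by
  have h := (Real.tendsto_pow_mul_exp_neg_atTop_nhds_zero n).comp
    (tendsto_neg_atBot_atTop.comp Real.tendsto_log_nhdsGT_zero)
  have h2 : Tendsto (fun s : ℝ => s * Real.log s ^ n) (𝓝[>] (0 : ℝ)) (𝓝 0) := by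
    have h3 := h.const_mul ((-1 : ℝ) ^ n)
    rw [mul_zero] at h3
    refine h3.congr' ?_
    filter_upwards [self_mem_nhdsWithin] with s hs
    have hs : 0 < s := hs
    simp only [Function.comp, neg_neg, Real.exp_log hs]
    rw [← mul_assoc, ← mul_pow]
    ring
  obtain ⟨i, rfl⟩ : ∃ i, j = i + 1 := ⟨j - 1, by omega⟩
  have h4 : Tendsto (fun s : ℝ => s ^ i) (𝓝[>] (0 : ℝ)) (𝓝 (0 ^ i)) :=
    ((continuous_pow i).tendsto 0).mono_left nhdsWithin_le_nhds
  have h5 := h4.mul h2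
  rw [mul_zero] at h5
  refine h5.congr fun s => by ring

lemma lim_main (k : ℕ) (hk : 1 ≤ k) (Q : ℝ → ℝ → ℝ) (hQ : Continuous fun x : ℝ × ℝ => Q x.1 x.2) :
    Tendsto (fun s : ℝ => s * Q (s ^ k) (Real.log s)⁻¹ / q0 k (s ^ k) (Real.log s)⁻¹ ^ 3)
      (𝓝[>] (0 : ℝ)) (𝓝 0) := by
  have hp : Tendsto (fun s : ℝ => s ^ k) (𝓝[>] (0 : ℝ)) (𝓝 0) := by
    simpa using lim_log 0 k hk
  have hm : Tendsto (fun s : ℝ => (Real.log s)⁻¹) (𝓝[>] (0 : ℝ)) (𝓝 0) :=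
    Real.tendsto_log_nhdsGT_zero.inv_tendsto_atBot
  have hq : Tendsto (fun s : ℝ => Q (s ^ k) (Real.log s)⁻¹) (𝓝[>] (0 : ℝ)) (𝓝 (Q 0 0)) :=
    (hQ.tendsto (0, 0)).comp (hp.prodMk_nhds hm)
  have hd : Tendsto (fun s : ℝ => (k : ℝ) ^ 2 * (s ^ k * Real.log s ^ 2) + (1 - s ^ k) ^ 2)
      (𝓝[>] (0 : ℝ)) (𝓝 1) := by
    have := ((lim_log 2 k hk).const_mul ((k : ℝ) ^ 2)).add ((hp.const_sub 1).pow 2)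
    simpa using this
  have hl := (lim_log 6 1 le_rfl).mul hq
  have h := hl.div (hd.pow 3) (by norm_num)
  rw [zero_mul, zero_div] at h
  refine h.congr' ?_
  have hlt : ∀ᶠ s : ℝ in 𝓝[>] (0 : ℝ), Real.log s < 0 :=
    Real.tendsto_log_nhdsGT_zero.eventually (eventually_lt_atBot 0)
  filter_upwards [hlt] with s hs
  have hs := hs.ne
  have e : (k : ℝ) ^ 2 * (s ^ k * Real.log s ^ 2) + (1 - s ^ k) ^ 2
      = Real.log s ^ 2 * q0 k (s ^ k) (Real.log s)⁻¹ := by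
    unfold q0
    field_simp
  simp only [Pi.div_apply, Pi.mul_apply, Pi.pow_apply]
  rw [e]
  generalize q0 k (s ^ k) (Real.log s)⁻¹ = a
  generalize Q (s ^ k) (Real.log s)⁻¹ = b
  rw [mul_pow, ← pow_mul, pow_one, mul_right_comm, mul_comm, mul_div_mul_left]
  exact pow_ne_zero _ hs

lemma cont_q1 (k : ℝ) : Continuous fun x : ℝ × ℝ => q1 k x.1 x.2 := by
  unfold q1
  fun_prop

lemma cont_q12 (k : ℝ) : Continuous fun x : ℝ × ℝ => q1 k x.1 x.2 + q2 k x.1 x.2 := by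
  unfold q2 q1
  fun_prop

/-- `∂h_k/h_k³`, `∂̄h_k/h_k³` and `∂∂̄h_k/h_k³` all tend to `0`
as `z → 0` in `ℂ∖{0}`. -/
theorem stmt12 (k : ℕ) (hk : 1 ≤ k)
    (hkfun : ℂ → ℝ)
    (hkdef : ∀ w, hkfun w =
      (k : ℝ) ^ 2 * ‖w‖ ^ (2 * (k - 1)) *
        (1 + ‖w‖ ^ (2 * k) * u (‖w‖ ^ (2 * k)) ^ 2)) :
    Tendsto (fun z => wdzR hkfun z / (hkfun z : ℂ) ^ 3) (𝓝[≠] (0 : ℂ)) (𝓝 0) ∧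
    Tendsto (fun z => wdzbarR hkfun z / (hkfun z : ℂ) ^ 3) (𝓝[≠] (0 : ℂ)) (𝓝 0) ∧
    Tendsto (fun z => wlapR hkfun z / (hkfun z : ℂ) ^ 3) (𝓝[≠] (0 : ℂ)) (𝓝 0) := by
  have hev : ∀ z : ℂ, z ≠ 0 ∧ ‖z‖ < 1 → (fun w => (hkfun w : ℂ)) =ᶠ[𝓝 z]
      (fun w : ℂ => (((fun s : ℝ => q0 k (s ^ k) (Real.log s)⁻¹ / s) (‖w‖ ^ 2) : ℝ) : ℂ)) := by
    intro z hz
    filter_upwards [good_nhds hz] with w hw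
    rw [hkdef w, h_eq k hk w hw]
  have hval : ∀ z : ℂ, z ≠ 0 ∧ ‖z‖ < 1 →
      hkfun z = q0 k ((‖z‖ ^ 2) ^ k) (Real.log (‖z‖ ^ 2))⁻¹ / ‖z‖ ^ 2 := by
    intro z hz
    rw [hkdef z, h_eq k hk z hz]
  have hdz : ∀ z : ℂ, z ≠ 0 ∧ ‖z‖ < 1 → wdzR hkfun z =
      ((q1 k ((‖z‖ ^ 2) ^ k) (Real.log (‖z‖ ^ 2))⁻¹ / (‖z‖ ^ 2) ^ 2 : ℝ) : ℂ)
        * (starRingEnd ℂ) z := by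
    intro z hz
    obtain ⟨hs, hl⟩ := good_s hz
    rw [← wdz_comp _ _ z (hd_0 k _ hs hl)]
    unfold wdzR wdz
    rw [(hev z hz).fderiv_eq]
  have hdzb : ∀ z : ℂ, z ≠ 0 ∧ ‖z‖ < 1 → wdzbarR hkfun z =
      ((q1 k ((‖z‖ ^ 2) ^ k) (Real.log (‖z‖ ^ 2))⁻¹ / (‖z‖ ^ 2) ^ 2 : ℝ) : ℂ) * z := by
    intro z hz
    obtain ⟨hs, hl⟩ := good_s hz
    rw [← wdzbar_comp _ _ z (hd_0 k _ hs hl)]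
    unfold wdzbarR wdzbar
    rw [(hev z hz).fderiv_eq]
  have hlap : ∀ z : ℂ, z ≠ 0 ∧ ‖z‖ < 1 → wlapR hkfun z =
      ((q1 k ((‖z‖ ^ 2) ^ k) (Real.log (‖z‖ ^ 2))⁻¹ / (‖z‖ ^ 2) ^ 2
        + ‖z‖ ^ 2 * (q2 k ((‖z‖ ^ 2) ^ k) (Real.log (‖z‖ ^ 2))⁻¹ / (‖z‖ ^ 2) ^ 3) : ℝ) : ℂ) := by
    intro z hz
    obtain ⟨hs, hl⟩ := good_s hz
    rw [← wdz_comp_mul _ _ z (hd_1 k _ hs hl)]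
    have he : wdzbarR hkfun =ᶠ[𝓝 z] (fun w : ℂ => (((fun s : ℝ =>
        q1 k (s ^ k) (Real.log s)⁻¹ / s ^ 2) (‖w‖ ^ 2) : ℝ) : ℂ) * w) := by
      filter_upwards [good_nhds hz] with w hw
      exact hdzb w hw
    unfold wlapR wdz
    rw [he.fderiv_eq]
  have L1 := (lim_main k hk (q1 k) (cont_q1 k)).comp lim_s
  have L2 := (lim_main k hk (fun p m => q1 k p m + q2 k p m) (cont_q12 k)).comp lim_s
  have C1 : Tendsto (fun z : ℂ => (((‖z‖ ^ 2) * q1 k ((‖z‖ ^ 2) ^ k) (Real.log (‖z‖ ^ 2))⁻¹ /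
      q0 k ((‖z‖ ^ 2) ^ k) (Real.log (‖z‖ ^ 2))⁻¹ ^ 3 : ℝ) : ℂ)) (𝓝[≠] (0 : ℂ)) (𝓝 0) :=
    (Complex.continuous_ofReal.tendsto' 0 0 Complex.ofReal_zero).comp L1
  have C2 : Tendsto (fun z : ℂ => (((‖z‖ ^ 2) * (q1 k ((‖z‖ ^ 2) ^ k) (Real.log (‖z‖ ^ 2))⁻¹
      + q2 k ((‖z‖ ^ 2) ^ k) (Real.log (‖z‖ ^ 2))⁻¹) /
      q0 k ((‖z‖ ^ 2) ^ k) (Real.log (‖z‖ ^ 2))⁻¹ ^ 3 : ℝ) : ℂ)) (𝓝[≠] (0 : ℂ)) (𝓝 0) :=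
    (Complex.continuous_ofReal.tendsto' 0 0 Complex.ofReal_zero).comp L2
  have Z1 : Tendsto (fun z : ℂ => z) (𝓝[≠] (0 : ℂ)) (𝓝 0) := tendsto_id.mono_left nhdsWithin_le_nhds
  have Z2 : Tendsto (fun z : ℂ => (starRingEnd ℂ) z) (𝓝[≠] (0 : ℂ)) (𝓝 0) :=
    (Complex.continuous_conj.tendsto' 0 0 (map_zero _)).mono_left nhdsWithin_le_nhds
  have alg : ∀ (s a b : ℝ), s ≠ 0 → a / s ^ 2 / (b / s) ^ 3 = s * a / b ^ 3 := by
    intro s a b hs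
    by_cases hb : b = 0
    · simp [hb]
    · field_simp
  refine ⟨?_, ?_, ?_⟩
  · have := C1.mul Z2
    rw [mul_zero] at this
    refine this.congr' ?_
    filter_upwards [good_ev] with z hz
    rw [hdz z hz, hval z hz, ← alg _ _ _ (good_s hz).1]
    push_cast
    ring
  · have := C1.mul Z1
    rw [mul_zero] at this
    refine this.congr' ?_
    filter_upwards [good_ev] with z hz
    rw [hdzb z hz, hval z hz, ← alg _ _ _ (good_s hz).1]
    push_cast
    ring
  · refine C2.congr' ?_
    filter_upwards [good_ev] with z hz
    rw [hlap z hz, hval z hz, ← alg _ _ _ (good_s hz).1, ← Complex.ofReal_pow,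
      ← Complex.ofReal_div]
    congr 2
    have := (good_s hz).1
    field_simp
end

section
/- Let Ω ⊆ ℂ be an open set containing 0, let g₁ : Ω → ℂ be holomorphic, and let k ≥ 1 be an integer. Define h : Ω∖{0} → ℝ by h(w) = |g₁(w)|² + k²·|w|^{2(k−1)}·(1 + |w|^{2k}·u(|w|^{2k})²), and let K denote the Gaussian curvature of the conformal metric h(w)|dw|² on Ω∖{0}. Then K(w) → −4 as w → 0 with w ∈ Ω∖{0}. -/
open Complex Filter Topology Metric
open scoped ComplexOrder

/-- Wirtinger derivatives `a` and `b` of `f` at `z`. -/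
def HasW (f : ℂ → ℂ) (a b : ℂ) (z : ℂ) : Prop :=
  HasFDerivAt f (a • (1 : ℂ →L[ℝ] ℂ) + b • (Complex.conjCLE : ℂ →L[ℝ] ℂ)) z

open ComplexConjugate

theorem HasW.wdz {f : ℂ → ℂ} {a b z : ℂ} (h : HasW f a b z) : wdz f z = a := by
  unfold HasW at h
  unfold _root_.wdz
  rw [h.fderiv]
  simp
  linear_combination (-(1/2) * a + (1/2) * b) * Complex.I_sq

theorem HasW.wdzbar {f : ℂ → ℂ} {a b z : ℂ} (h : HasW f a b z) : wdzbar f z = b := by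
  unfold HasW at h
  unfold _root_.wdzbar
  rw [h.fderiv]
  simp
  linear_combination ((1/2) * a - (1/2) * b) * Complex.I_sq

theorem HasW.congr' {f : ℂ → ℂ} {a b a' b' z : ℂ} (h : HasW f a b z) (ha : a = a') (hb : b = b') :
    HasW f a' b' z := by subst ha hb; exact h

theorem HasW.add {f g : ℂ → ℂ} {a b a' b' z : ℂ} (h : HasW f a b z) (h' : HasW g a' b' z) :
    HasW (fun w => f w + g w) (a + a') (b + b') z := by
  unfold HasW at *
  refine (HasFDerivAt.add h h').congr_fderiv ?_
  ext <;> simp <;> ring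

theorem HasW.mul {f g : ℂ → ℂ} {a b a' b' z : ℂ} (h : HasW f a b z) (h' : HasW g a' b' z) :
    HasW (fun w => f w * g w) (a * g z + f z * a') (b * g z + f z * b') z := by
  unfold HasW at *
  refine (HasFDerivAt.mul h h').congr_fderiv ?_
  apply ContinuousLinearMap.ext
  intro x
  simp
  ring

theorem HasW.const (c z : ℂ) : HasW (fun _ => c) 0 0 z := by
  unfold HasW
  refine (hasFDerivAt_const c z).congr_fderiv ?_
  apply ContinuousLinearMap.ext
  intro x
  simp

theorem HasW.holo {f : ℂ → ℂ} {a z : ℂ} (h : HasDerivAt f a z) : HasW f a 0 z := by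
  unfold HasW
  refine (h.hasFDerivAt.restrictScalars ℝ).congr_fderiv ?_
  apply ContinuousLinearMap.ext
  intro x
  simp
  try ring

theorem HasW.conj {f : ℂ → ℂ} {a b z : ℂ} (h : HasW f a b z) :
    HasW (fun w => conj (f w)) (conj b) (conj a) z := by
  unfold HasW at *
  have := (Complex.conjCLE : ℂ →L[ℝ] ℂ).hasFDerivAt.comp z h
  refine this.congr_fderiv ?_
  apply ContinuousLinearMap.ext
  intro x
  simp
  try ring

theorem HasW.inv {f : ℂ → ℂ} {a b z : ℂ} (h : HasW f a b z) (h0 : f z ≠ 0) :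
    HasW (fun w => (f w)⁻¹) (-a / f z ^ 2) (-b / f z ^ 2) z := by
  unfold HasW at *
  have := ((hasDerivAt_inv h0).hasFDerivAt.restrictScalars ℝ).comp z h
  refine this.congr_fderiv ?_
  apply ContinuousLinearMap.ext
  intro x
  simp
  field_simp
  try ring

noncomputable def ell (z : ℂ) : ℂ := ((Real.log (Complex.normSq z) : ℝ) : ℂ)

theorem HasW.ell {z : ℂ} (hz : z ≠ 0) : HasW ell (1 / z) (1 / conj z) z := by
  have hn : Complex.normSq z ≠ 0 := by simpa using hz
  have hc : conj z ≠ 0 := by simpa using hz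
  have h1 : HasW (fun w : ℂ => w * conj w) (conj z) z z := by
    refine ((HasW.holo (hasDerivAt_id' z)).mul (HasW.holo (hasDerivAt_id' z)).conj).congr' ?_ ?_ <;>
      simp
  have h2 : HasFDerivAt (fun w : ℂ => Complex.normSq w) 
     (Complex.reCLM.comp (conj z • (1 : ℂ →L[ℝ] ℂ) + z • (Complex.conjCLE : ℂ →L[ℝ] ℂ))) z := by
    have := Complex.reCLM.hasFDerivAt.comp z h1
    refine this.congr_of_eventuallyEq (Filter.Eventually.of_forall fun w => ?_)
    simp [Complex.normSq_apply]
  have h3 := Complex.ofRealCLM.hasFDerivAt.comp z (h2.log hn)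
  refine HasFDerivAt.congr_fderiv (f := _root_.ell) h3 ?_
  apply ContinuousLinearMap.ext
  intro x
  have e : (Complex.normSq z : ℂ) = z * conj z := (Complex.mul_conj z).symm
  simp only [ContinuousLinearMap.comp_apply, ContinuousLinearMap.smul_apply,
    ContinuousLinearMap.add_apply]
  simp
  rw [e]
  have : (((z.re * x.re + z.im * x.im + (z.re * x.re + z.im * x.im) : ℝ)) : ℂ) = conj z * x + z * conj x := by
    apply Complex.ext <;> simp <;> ring
  push_cast at this
  rw [this]
  field_simp

theorem norm_ell (z : ℂ) : ‖ell z‖ = 2 * |Real.log ‖z‖| := by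
  unfold ell
  rw [Complex.norm_real, Complex.normSq_eq_norm_sq, Real.log_pow]
  simp

theorem conj_ell (z : ℂ) : conj (ell z) = ell z := by
  unfold ell; exact Complex.conj_ofReal _

theorem aux_lim (m : ℕ) : Tendsto (fun z : ℂ => z * ell z ^ (m+1)) (𝓝[≠] 0) (𝓝 0) := by
  rw [tendsto_zero_iff_norm_tendsto_zero]
  have h := (tendsto_log_mul_rpow_nhdsGT_zero (r := 1 / ((m+1 : ℕ):ℝ)) (by positivity))
  have h2 := (((h.comp (tendsto_norm_nhdsNE_zero (E := ℂ))).abs.const_mul 2).pow (m+1))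
  simp only [abs_zero, mul_zero, ne_eq, Nat.add_eq_zero_iff, one_ne_zero, and_false, not_false_eq_true, zero_pow] at h2
  refine h2.congr fun z => ?_
  simp only [Function.comp, norm_mul, norm_pow, norm_ell, abs_mul, mul_pow]
  rw [abs_of_nonneg (Real.rpow_nonneg (norm_nonneg z) _), ← Real.rpow_natCast (‖z‖ ^ _), ← Real.rpow_mul (norm_nonneg z)]
  rw [one_div, inv_mul_cancel₀ (by positivity), Real.rpow_one]
  ring

theorem lim1 : Tendsto (fun z : ℂ => z * ell z) (𝓝[≠] 0) (𝓝 0) := by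
  simpa using aux_lim 0
theorem lim2 : Tendsto (fun z : ℂ => z * ell z ^ 2) (𝓝[≠] 0) (𝓝 0) := aux_lim 1
theorem Tendsto.cj {f : ℂ → ℂ} {l : Filter ℂ} {c : ℂ} (h : Tendsto f l (𝓝 c)) :
    Tendsto (fun z => conj (f z)) l (𝓝 (conj c)) := (Complex.continuous_conj.tendsto c).comp h
theorem lim1c : Tendsto (fun z : ℂ => conj z * ell z) (𝓝[≠] 0) (𝓝 0) := by
  simpa [conj_ell] using Tendsto.cj lim1
theorem lim2c : Tendsto (fun z : ℂ => conj z * ell z ^ 2) (𝓝[≠] 0) (𝓝 0) := by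
  simpa [conj_ell] using Tendsto.cj lim2

def Good (e : ℂ → ℂ) : Prop := ∃ e1 e2 e12 : ℂ → ℂ,
  (∀ᶠ z in 𝓝[≠] 0, HasW e (e1 z) (e2 z) z) ∧
  (∀ᶠ z in 𝓝[≠] 0, ∃ b, HasW e2 (e12 z) b z) ∧
  Tendsto e (𝓝[≠] 0) (𝓝 0) ∧
  Tendsto (fun z => z * ell z * e1 z) (𝓝[≠] 0) (𝓝 0) ∧
  Tendsto (fun z => conj z * ell z * e2 z) (𝓝[≠] 0) (𝓝 0) ∧
  Tendsto (fun z => (z * ell z) * (conj z * ell z) * e12 z) (𝓝[≠] 0) (𝓝 0)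

theorem Good.add {e f : ℂ → ℂ} (he : Good e) (hf : Good f) : Good (fun z => e z + f z) := by
  obtain ⟨e1, e2, e12, a, b, c, d, g, h⟩ := he
  obtain ⟨e1', e2', e12', a', b', c', d', g', h'⟩ := hf
  refine ⟨fun z => e1 z + e1' z, fun z => e2 z + e2' z, fun z => e12 z + e12' z, ?_, ?_, ?_, ?_, ?_, ?_⟩
  · filter_upwards [a, a'] with z h h' using h.add h'
  · filter_upwards [b, b'] with z ⟨_, h⟩ ⟨_, h'⟩ using ⟨_, h.add h'⟩
  · simpa using c.add c'
  · simpa [mul_add] using d.add d'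
  · simpa [mul_add] using g.add g'
  · simpa [mul_add] using h.add h'

theorem Good.smul {e : ℂ → ℂ} (x : ℂ) (he : Good e) : Good (fun z => x * e z) := by
  obtain ⟨e1, e2, e12, a, b, c, d, g, h⟩ := he
  refine ⟨fun z => x * e1 z, fun z => x * e2 z, fun z => x * e12 z, ?_, ?_, ?_, ?_, ?_, ?_⟩
  · filter_upwards [a] with z h
    exact ((HasW.const x z).mul h).congr' (by simp) (by simp)
  · filter_upwards [b] with z ⟨_, h⟩
    exact ⟨_, ((HasW.const x z).mul h).congr' (by simp) rfl⟩
  · simpa using c.const_mul x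
  · simpa [mul_left_comm] using d.const_mul x
  · simpa [mul_left_comm] using g.const_mul x
  · simpa [mul_left_comm] using h.const_mul x

theorem good_basic (B : ℂ → ℂ) (hB : AnalyticAt ℂ B 0) :
    Good (fun z => (z * B z) * conj (z * B z)) ∧
    Good (fun z => ell z * ell z * ((z * B z) * conj (z * B z))) := by
  set D : ℂ → ℂ := fun z => B z + z * deriv B z with hD
  have hDa : AnalyticAt ℂ D 0 := hB.add (analyticAt_id.mul hB.deriv)
  have hW : ∀ᶠ z in 𝓝[≠] (0:ℂ), z ≠ 0 ∧ HasW (fun z => z * B z) (D z) 0 z ∧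
      HasW (fun z => conj (z * B z)) 0 (conj (D z)) z ∧
      (HasW (fun z => conj (B z)) 0 (conj (deriv B z)) z) ∧
      HasW (fun z => conj (D z)) 0 (conj (deriv D z)) z := by
    filter_upwards [self_mem_nhdsWithin, hB.eventually_analyticAt.filter_mono nhdsWithin_le_nhds,
      hDa.eventually_analyticAt.filter_mono nhdsWithin_le_nhds] with z hz h1 h2
    have hA : HasW (fun z => z * B z) (D z) 0 z := by
      refine ((HasW.holo (hasDerivAt_id' z)).mul
        (HasW.holo h1.differentiableAt.hasDerivAt)).congr' ?_ ?_ <;> simp [hD]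
    refine ⟨hz, hA, hA.conj.congr' (by simp) rfl,
      (HasW.holo h1.differentiableAt.hasDerivAt).conj.congr' (by simp) rfl,
      (HasW.holo h2.differentiableAt.hasDerivAt).conj.congr' (by simp) rfl⟩
  have lz : Tendsto (fun z : ℂ => z) (𝓝[≠] 0) (𝓝 0) := nhdsWithin_le_nhds
  have lzc := Tendsto.cj lz
  have lB : Tendsto B (𝓝[≠] 0) (𝓝 (B 0)) := hB.continuousAt.tendsto.mono_left nhdsWithin_le_nhds
  have lD : Tendsto D (𝓝[≠] 0) (𝓝 (D 0)) := hDa.continuousAt.tendsto.mono_left nhdsWithin_le_nhds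
  have lBc := Tendsto.cj lB
  have lDc := Tendsto.cj lD
  constructor
  · refine ⟨fun z => D z * conj (z * B z), fun z => (z * B z) * conj (D z),
      fun z => D z * conj (D z), ?_, ?_, ?_, ?_, ?_, ?_⟩
    · filter_upwards [hW] with z ⟨hz, hA, hAc, hBc, hDc⟩
      exact (hA.mul hAc).congr' (by simp) (by simp)
    · filter_upwards [hW] with z ⟨hz, hA, hAc, hBc, hDc⟩
      exact ⟨_, (hA.mul hDc).congr' (by simp) rfl⟩
    · have := (lz.mul lB).mul (lzc.mul lBc)
      simpa using this
    · have := (lim1.mul lD).mul (lzc.mul lBc)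
      simpa [mul_assoc] using this
    · have := (lim1c.mul lDc).mul (lz.mul lB)
      refine (this.congr fun z => ?_).trans (by simp)
      ring
    · have := (lim1.mul lim1c).mul (lD.mul lDc)
      simpa using this
  · refine ⟨fun z => 2 * (ell z * (B z * conj (z * B z))) + ell z * ell z * (D z * conj (z * B z)),
      fun z => 2 * (ell z * ((z * B z) * conj (B z))) + ell z * ell z * ((z * B z) * conj (D z)),
      fun z => 2 * (B z * conj (B z)) + 2 * ell z * (D z * conj (B z)) + 2 * ell z * (B z * conj (D z))
        + ell z ^ 2 * (D z * conj (D z)), ?_, ?_, ?_, ?_, ?_, ?_⟩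
    · filter_upwards [hW] with z ⟨hz, hA, hAc, hBc, hDc⟩
      have hc : conj z ≠ 0 := by simpa using hz
      have hl := HasW.ell hz
      refine ((hl.mul hl).mul (hA.mul hAc)).congr' ?_ ?_
      · simp only [map_mul]; field_simp; ring
      · simp only [map_mul]; field_simp; ring
    · filter_upwards [hW] with z ⟨hz, hA, hAc, hBc, hDc⟩
      have hc : conj z ≠ 0 := by simpa using hz
      have hl := HasW.ell hz
      refine ⟨_, (((HasW.const 2 z).mul (hl.mul (hA.mul hBc))).add ((hl.mul hl).mul (hA.mul hDc))).congr' ?_ rfl⟩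
      field_simp; ring
    · have := (lim1.mul lB).mul (lim1c.mul lBc)
      refine (this.congr fun z => ?_).trans (by simp)
      simp only [map_mul]; ring
    · have := (((lim1.mul lim1c).mul (lB.mul lBc)).const_mul 2).add ((lim2.mul lim1c).mul (lD.mul lBc))
      refine (this.congr fun z => ?_).trans (by simp)
      simp only [map_mul]; ring
    · have := (((lim1.mul lim1c).mul (lB.mul lBc)).const_mul 2).add ((lim2.mul lim1c).mul (lB.mul lDc))
      refine (this.congr fun z => ?_).trans (by simp)
      ring
    · have := ((((lim1.mul lim1c).mul (lB.mul lBc)).const_mul 2).add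
        ((lim2.mul lim1c).mul (((lD.mul lBc).add (lB.mul lDc)).const_mul 2))).add
        ((lim2.mul lim2c).mul (lD.mul lDc))
      refine (this.congr fun z => ?_).trans (by simp)
      ring

theorem ell_ne {z : ℂ} (hz : z ≠ 0) (h1 : ‖z‖ < 1) : ell z ≠ 0 := by
  have : 0 < ‖z‖ := norm_pos_iff.2 hz
  rw [← norm_pos_iff, norm_ell]
  have := Real.log_neg this h1
  have := abs_pos_of_neg this
  positivity

theorem ev_nhds {p : ℂ → Prop} (h : ∀ᶠ z in 𝓝[≠] (0:ℂ), p z) :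
    ∀ᶠ z in 𝓝[≠] (0:ℂ), ∀ᶠ y in 𝓝 z, p y := by
  filter_upwards [eventually_eventually_nhdsWithin.2 h, self_mem_nhdsWithin] with z hz hz0
  rwa [IsOpen.nhdsWithin_eq isOpen_compl_singleton hz0] at hz

theorem main_lim (h : ℂ → ℝ) (e : ℂ → ℂ) (he : Good e)
    (hh : ∀ᶠ z in 𝓝[≠] (0:ℂ), (h z : ℂ) = (z * conj z * (ell z * ell z))⁻¹ * (1 + e z)) :
    Tendsto (gaussCurv h) (𝓝[≠] 0) (𝓝 (-4)) := by
  obtain ⟨e1, e2, e12, H1, H2, L0, L1, L2, L12⟩ := he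
  have hlt : ∀ᶠ z in 𝓝[≠] (0:ℂ), ‖z‖ < 1 := by
    refine Filter.Eventually.filter_mono nhdsWithin_le_nhds ?_
    filter_upwards [Metric.ball_mem_nhds (0:ℂ) one_pos] with z hz
    simpa using hz
  have hF : ∀ᶠ z in 𝓝[≠] (0:ℂ), 1 + e z ≠ 0 := by
    have : Tendsto (fun z => 1 + e z) (𝓝[≠] 0) (𝓝 (1 + 0)) := L0.const_add 1
    exact this.eventually_ne (by simp)
  -- basic metric
  set h0 : ℂ → ℂ := fun z => (z * conj z * (ell z * ell z))⁻¹ with hh0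
  set h1 : ℂ → ℂ := fun z => -(h0 z * (z⁻¹ * (1 + 2 * (ell z)⁻¹))) with hh1
  set h2 : ℂ → ℂ := fun z => -1 * (h0 z * ((conj z)⁻¹ * (1 + 2 * (ell z)⁻¹))) with hh2
  set h12 : ℂ → ℂ := fun z => h0 z * (z * conj z)⁻¹ *
    ((1 + 2 * (ell z)⁻¹) ^ 2 + 2 * (ell z)⁻¹ ^ 2) with hh12
  have W0 : ∀ᶠ z in 𝓝[≠] (0:ℂ), HasW h0 (h1 z) (h2 z) z := by
    filter_upwards [hlt, self_mem_nhdsWithin] with z hz1 hz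
    have hz : z ≠ 0 := hz
    have hc : conj z ≠ 0 := by simpa using hz
    have hl := ell_ne hz hz1
    have Wz := HasW.holo (hasDerivAt_id' z)
    refine (((Wz.mul Wz.conj).mul ((HasW.ell hz).mul (HasW.ell hz))).inv ?_).congr' ?_ ?_
    · simp [hz, hl]
    · simp only [hh1, hh0, map_one, map_zero]; field_simp; ring
    · simp only [hh2, hh0, map_one, map_zero]; field_simp; ring
  have W2 : ∀ᶠ z in 𝓝[≠] (0:ℂ), ∃ b, HasW h2 (h12 z) b z := by
    filter_upwards [W0, hlt, self_mem_nhdsWithin] with z W0 hz1 hz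
    have hz : z ≠ 0 := hz
    have hc : conj z ≠ 0 := by simpa using hz
    have hl := ell_ne hz hz1
    have Wz := HasW.holo (hasDerivAt_id' z)
    refine ⟨_, ((HasW.const (-1) z).mul (W0.mul ((Wz.conj.inv hc).mul ((HasW.const 1 z).add
      ((HasW.const 2 z).mul ((HasW.ell hz).inv hl)))))).congr' ?_ rfl⟩
    simp only [hh1, hh12, map_zero]; field_simp; ring
  have WH : ∀ᶠ z in 𝓝[≠] (0:ℂ), HasW (fun z => (h z : ℂ))
      (h1 z * (1 + e z) + h0 z * e1 z) (h2 z * (1 + e z) + h0 z * e2 z) z := by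
    filter_upwards [ev_nhds hh, W0, H1] with z hz W0 H1
    have := (W0.mul ((HasW.const 1 z).add H1)).congr' (by rw [zero_add]) (by rw [zero_add])
    exact HasFDerivAt.congr_of_eventuallyEq this hz
  have WH2 : ∀ᶠ z in 𝓝[≠] (0:ℂ), wlapR h z =
      h12 z * (1 + e z) + h2 z * e1 z + (h1 z * e2 z + h0 z * e12 z) := by
    filter_upwards [ev_nhds WH, W0, H1, W2, H2] with z hz W0 H1 ⟨_, W2⟩ ⟨_, H2⟩
    have := ((W2.mul ((HasW.const 1 z).add H1)).add (W0.mul H2)).congr' (by rw [zero_add]) rfl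
    refine HasW.wdz (HasFDerivAt.congr_of_eventuallyEq this ?_)
    filter_upwards [hz] with y hy
    exact hy.wdzbar
  have key : ∀ᶠ z in 𝓝[≠] (0:ℂ), -2 * ((1 + e z) * ((z * ell z) * (conj z * ell z) * e12 z)
      - (z * ell z * e1 z) * (conj z * ell z * e2 z) + 2 * (1 + e z) ^ 2) / (1 + e z) ^ 3
      = gaussCurv h z := by
    filter_upwards [hh, WH, WH2, hF, hlt, self_mem_nhdsWithin] with z hh WH WH2 hF hz1 hz
    have hz : z ≠ 0 := hz
    have hc : conj z ≠ 0 := by simpa using hz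
    have hl := ell_ne hz hz1
    unfold gaussCurv curvNum
    have a1 : wdzR h z = _ := WH.wdz
    have a2 : wdzbarR h z = _ := WH.wdzbar
    rw [a1, a2, WH2, hh]
    simp only [hh1, hh2, hh12, hh0]
    generalize 1 + e z = F at *
    generalize conj z = c at *
    generalize ell z = l at *
    field_simp
    ring
  refine Tendsto.congr' key ?_
  have l1 : Tendsto (fun z => 1 + e z) (𝓝[≠] 0) (𝓝 (1 + 0)) := L0.const_add 1
  have := (((l1.mul L12).sub (L1.mul L2)).add ((l1.pow 2).const_mul 2)).const_mul (-2)
  have := this.div (l1.pow 3) (by simp)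
  refine this.trans (le_of_eq ?_)
  norm_num

/-- for holomorphic `g₁` on an open `Ω ∋ 0` and
`h(w) = |g₁(w)|² + h_k(w)`, the Gaussian curvature of `h|dw|²` tends to `−4`
as `w → 0` within `Ω∖{0}`. -/
theorem stmt14 (Ω : Set ℂ) (hΩ : IsOpen Ω) (h0Ω : (0 : ℂ) ∈ Ω)
    (g₁ : ℂ → ℂ) (hg₁ : DifferentiableOn ℂ g₁ Ω)
    (k : ℕ) (hk : 1 ≤ k) :
    Tendsto (gaussCurv (fun w =>
        ‖g₁ w‖ ^ 2 +
          (k : ℝ) ^ 2 * ‖w‖ ^ (2 * (k - 1)) *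
            (1 + ‖w‖ ^ (2 * k) * u (‖w‖ ^ (2 * k)) ^ 2)))
      (𝓝[Ω \ {0}] (0 : ℂ)) (𝓝 (-4)) := by
  obtain ⟨n, rfl⟩ : ∃ n, k = n + 1 := ⟨k - 1, by omega⟩
  have hg : AnalyticAt ℂ g₁ 0 := hg₁.analyticAt (hΩ.mem_nhds h0Ω)
  have G1 := (good_basic g₁ hg).2
  have hp : ∀ m : ℕ, AnalyticAt ℂ (fun z : ℂ => z ^ m) 0 := fun m => analyticAt_id.pow m
  have G2 := ((good_basic _ (hp n)).2).smul (((n + 1 : ℕ) : ℂ) ^ 2)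
  have G3 := ((good_basic _ (hp n)).1).smul (-2)
  have G4 := (good_basic _ (hp (2 * n + 1))).1
  refine (main_lim _ _ (((G1.add G2).add G3).add G4) ?_).mono_left
    (nhdsWithin_mono _ (fun x hx => hx.2))
  have hlt : ∀ᶠ z in 𝓝[≠] (0:ℂ), ‖z‖ < 1 := by
    refine Filter.Eventually.filter_mono nhdsWithin_le_nhds ?_
    filter_upwards [Metric.ball_mem_nhds (0:ℂ) one_pos] with z hz
    simpa using hz
  filter_upwards [hlt, self_mem_nhdsWithin] with z hz1 hz
  have hz : z ≠ 0 := hz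
  have hc : conj z ≠ 0 := by simpa using hz
  have hl := ell_ne hz hz1
  have hr : 0 < ‖z‖ := norm_pos_iff.2 hz
  have ht : ‖z‖ ^ (2 * (n + 1)) ≠ 1 := (pow_lt_one₀ hr.le hz1 (by omega)).ne
  have hlog : ((Real.log (‖z‖ ^ (2 * (n + 1))) : ℝ) : ℂ) = ((n + 1 : ℕ) : ℂ) * ell z := by
    unfold ell
    rw [pow_mul, ← Complex.normSq_eq_norm_sq, Real.log_pow]
    push_cast; rfl
  have hn : ((n + 1 : ℕ) : ℂ) ≠ 0 := by exact_mod_cast Nat.succ_ne_zero n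
  have hsq : ∀ w : ℂ, (‖w‖ : ℂ) ^ 2 = w * conj w := fun w => (Complex.mul_conj' w).symm
  unfold u
  rw [if_neg ht]
  rw [Complex.ofReal_add, Complex.ofReal_mul, Complex.ofReal_mul, Complex.ofReal_add,
    Complex.ofReal_mul, Complex.ofReal_pow (_ / _), Complex.ofReal_div, Complex.ofReal_mul (_ ^ _) (Real.log _), hlog]
  simp only [Complex.ofReal_pow, Complex.ofReal_natCast, Complex.ofReal_sub, Complex.ofReal_one,
    pow_mul, hsq, Nat.add_sub_cancel, map_mul, map_pow]
  generalize ((n + 1 : ℕ) : ℂ) = N at *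
  generalize conj z = c at *
  generalize ell z = l at *
  generalize conj (g₁ z) = gc at *
  generalize g₁ z = g at *
  field_simp
  ring
end

section
/- Let U ⊆ ℂⁿ (n ≥ 1) be open and let f_j : U → ℂ (j ∈ ℕ) and f₀ : U → ℂ be holomorphic with f_j → f₀ uniformly on every compact subset of U. Let p ∈ U with f₀(p) ≠ 0, let X be a holomorphic map from an open neighborhood of p in U to ℂⁿ with X nowhere vanishing, let ε > 0, and let Z : B(0,ε) → U be holomorphic with Z(0) = p, Z′(T) = X(Z(T)), and f₀(Z(T)) ≠ 0 for all T ∈ B(0,ε). For each holomorphic f with f(Z(T)) ≠ 0 near T = 0, define h_f(T) = (1 + |f(Z(T))|²·u(|f(Z(T))|²)²)·|df(Z(T))(X(Z(T)))|² + ‖X(Z(T))‖², and let 𝒦_f(0) = −2·(h_f(0)·(∂∂̄h_f)(0) − (∂h_f)(0)·(∂̄h_f)(0))/h_f(0)³ be the Gaussian curvature of h_f(T)|dT|² at T = 0. Then for all sufficiently large j the function h_{f_j} is defined near T = 0, and 𝒦_{f_j}(0) → 𝒦_{f₀}(0) as j → ∞. -/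
open Complex Filter Topology Metric
open scoped ComplexOrder

lemma u_contDiffAt {t : ℝ} (ht : 0 < t) : ContDiffAt ℝ 2 u t := by
  have heq : ∀ s : ℝ, 0 < s → u s = (s * dslope Real.log 1 s)⁻¹ := by
    intro s hs
    unfold u
    split_ifs with h
    · subst h; simp
    · rw [dslope_of_ne _ h, slope_def_field, Real.log_one, sub_zero]
      rw [← mul_div_assoc, inv_div]
  have hev : u =ᶠ[𝓝 t] fun s => (s * dslope Real.log 1 s)⁻¹ := by
    filter_upwards [lt_mem_nhds ht] with s hs using heq s hs
  have hd : ContDiffAt ℝ 2 (dslope Real.log 1) t := by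
    by_cases h : t = 1
    · subst h
      obtain ⟨q, hq⟩ := analyticAt_log (x := (1:ℝ)) one_pos
      exact (hq.has_fpower_series_dslope_fslope).analyticAt.contDiffAt
    · have : dslope Real.log 1 =ᶠ[𝓝 t] fun s => Real.log s / (s - 1) := by
        filter_upwards [isOpen_ne.mem_nhds h] with s hs
        rw [dslope_of_ne _ hs, slope_def_field, Real.log_one, sub_zero]
      refine ContDiffAt.congr_of_eventuallyEq ?_ this
      exact (Real.contDiffAt_log.2 ht.ne').div (contDiffAt_id.sub contDiffAt_const) (sub_ne_zero.2 h)
  refine ContDiffAt.congr_of_eventuallyEq ?_ hev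
  refine (contDiffAt_id.mul hd).inv ?_
  refine mul_ne_zero ht.ne' ?_
  by_cases h : t = 1
  · subst h; simp
  · rw [dslope_of_ne _ h, slope_def_field, Real.log_one, sub_zero]
    exact div_ne_zero (Real.log_ne_zero_of_pos_of_ne_one ht h) (sub_ne_zero.2 h)

noncomputable def jetA (F : ℂ × ℂ × ℂ → ℂ) (a b : ℂ × ℂ × ℂ) (v : ℂ) : ℂ :=
  fderiv ℝ F a (v • b)

noncomputable def jetB (F : ℂ × ℂ × ℂ → ℂ) (a b c : ℂ × ℂ × ℂ) (v w : ℂ) : ℂ :=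
  fderiv ℝ F a (v • w • c) + fderiv ℝ (fderiv ℝ F) a (w • b) (v • b)

lemma hasFDerivAt_real {E : Type*} [NormedAddCommGroup E] [NormedSpace ℂ E] [NormedSpace ℝ E]
    [IsScalarTower ℝ ℂ E] {G : ℂ → E} {T : ℂ} (hG : DifferentiableAt ℂ G T) :
    DifferentiableAt ℝ G T ∧ ∀ v, fderiv ℝ G T v = v • deriv G T := by
  have h := hG.hasFDerivAt.restrictScalars ℝ
  refine ⟨h.differentiableAt, fun v => ?_⟩
  rw [h.fderiv]
  simp

lemma jet1 (F : ℂ × ℂ × ℂ → ℂ) (G : ℂ → ℂ × ℂ × ℂ) (T v : ℂ)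
    (hF : DifferentiableAt ℝ F (G T)) (hG : DifferentiableAt ℂ G T) :
    fderiv ℝ (fun T => F (G T)) T v = jetA F (G T) (deriv G T) v := by
  obtain ⟨h1, h2⟩ := hasFDerivAt_real hG
  have := (hF.hasFDerivAt.comp T h1.hasFDerivAt).fderiv
  change fderiv ℝ (F ∘ G) T v = _
  rw [this]
  simp [jetA, h2]

lemma jet2 (F : ℂ × ℂ × ℂ → ℂ) (G : ℂ → ℂ × ℂ × ℂ) (v : ℂ)
    (hF : ContDiffAt ℝ 2 F (G 0)) (hG : AnalyticAt ℂ G 0) :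
    DifferentiableAt ℝ (fun T => fderiv ℝ (fun T => F (G T)) T v) 0 ∧
    ∀ w, fderiv ℝ (fun T => fderiv ℝ (fun T => F (G T)) T v) 0 w
      = jetB F (G 0) (deriv G 0) (deriv (deriv G) 0) v w := by
  have hev : (fun T => fderiv ℝ (fun T => F (G T)) T v) =ᶠ[𝓝 0]
      fun T => fderiv ℝ F (G T) (v • deriv G T) := by
    have e1 := hG.continuousAt.eventually (hF.eventually (by simp))
    filter_upwards [e1, hG.eventually_analyticAt] with T h1 h2
    exact jet1 F G T v (h1.differentiableAt (by simp)) h2.differentiableAt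
  have hF' : DifferentiableAt ℝ (fderiv ℝ F) (G 0) :=
    (hF.fderiv_right (m := 1) (by norm_num)).differentiableAt (by simp)
  obtain ⟨h1, h2⟩ := hasFDerivAt_real hG.differentiableAt
  obtain ⟨h3, h4⟩ := hasFDerivAt_real hG.deriv.differentiableAt
  have hA := hF'.hasFDerivAt.comp (0:ℂ) h1.hasFDerivAt
  have hB : HasFDerivAt (fun T => v • deriv G T) (v • fderiv ℝ (deriv G) 0) 0 :=
    h3.hasFDerivAt.const_smul v
  have hC := (hA.clm_apply hB).congr_of_eventuallyEq hev
  refine ⟨hC.differentiableAt, fun w => ?_⟩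
  rw [hC.fderiv]
  simp [jetB, h2, h4]

noncomputable def curvJ (F : ℂ × ℂ × ℂ → ℂ) (a b c : ℂ × ℂ × ℂ) : ℂ :=
  -2 * (F a * (((jetB F a b c 1 1 + I * jetB F a b c I 1) / 2
      - I * ((jetB F a b c 1 I + I * jetB F a b c I I) / 2)) / 2)
    - ((jetA F a b 1 - I * jetA F a b I) / 2) * ((jetA F a b 1 + I * jetA F a b I) / 2)) / F a ^ 3

lemma gauss_eq (h : ℂ → ℝ) (F : ℂ × ℂ × ℂ → ℂ) (G : ℂ → ℂ × ℂ × ℂ)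
    (hF : ContDiffAt ℝ 2 F (G 0)) (hG : AnalyticAt ℂ G 0)
    (hh : (fun T => (h T : ℂ)) =ᶠ[𝓝 0] fun T => F (G T)) :
    gaussCurv h 0 = curvJ F (G 0) (deriv G 0) (deriv (deriv G) 0) := by
  have e0 : (h 0 : ℂ) = F (G 0) := hh.self_of_nhds
  have hd : fderiv ℝ (fun T => (h T : ℂ)) =ᶠ[𝓝 0] fderiv ℝ (fun T => F (G T)) := hh.fderiv
  have ebar : wdzbarR h =ᶠ[𝓝 0] fun T => (fderiv ℝ (fun T => F (G T)) T 1
      + I * fderiv ℝ (fun T => F (G T)) T I) * (1/2) := by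
    filter_upwards [hd] with T hT
    simp only [wdzbarR, wdzbar, hT]; ring
  have j1 := jet1 F G 0 1 (hF.differentiableAt (by simp)) hG.differentiableAt
  have jI := jet1 F G 0 I (hF.differentiableAt (by simp)) hG.differentiableAt
  obtain ⟨d1, k1⟩ := jet2 F G 1 hF hG
  obtain ⟨dI, kI⟩ := jet2 F G I hF hG
  have key := ((d1.hasFDerivAt.add (dI.hasFDerivAt.const_mul I)).mul_const (1/2:ℂ)).congr_of_eventuallyEq
    ebar
  have hl : wlapR h 0 = (fderiv ℝ (wdzbarR h) 0 1 - I * fderiv ℝ (wdzbarR h) 0 I) / 2 := rfl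
  rw [key.fderiv] at hl
  simp only [gaussCurv, curvNum, curvJ, hl, e0]
  simp only [wdzR, wdz, wdzbarR, wdzbar, hd.self_of_nhds, j1, jI]
  simp [k1, kI]
  ring

lemma clm_tendsto {E' F' : Type*} [NormedAddCommGroup E'] [NormedSpace ℝ E']
    [NormedAddCommGroup F'] [NormedSpace ℝ F'] {A : ℕ → E' →L[ℝ] F'} {A0 : E' →L[ℝ] F'}
    {x : ℕ → E'} {x0 : E'} (hA : Tendsto A atTop (𝓝 A0)) (hx : Tendsto x atTop (𝓝 x0)) :
    Tendsto (fun j => A j (x j)) atTop (𝓝 (A0 x0)) :=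
  (isBoundedBilinearMap_apply.continuous.tendsto (A0, x0)).comp (hA.prodMk_nhds hx)

lemma curvJ_tendsto (F : ℂ × ℂ × ℂ → ℂ) (a b c : ℕ → ℂ × ℂ × ℂ) (a0 b0 c0 : ℂ × ℂ × ℂ)
    (hF : ContDiffAt ℝ 2 F a0) (hne : F a0 ≠ 0)
    (ha : Tendsto a atTop (𝓝 a0)) (hb : Tendsto b atTop (𝓝 b0)) (hc : Tendsto c atTop (𝓝 c0)) :
    Tendsto (fun j => curvJ F (a j) (b j) (c j)) atTop (𝓝 (curvJ F a0 b0 c0)) := by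
  have t0 : Tendsto (fun j => F (a j)) atTop (𝓝 (F a0)) := hF.continuousAt.tendsto.comp ha
  have hF1 := hF.fderiv_right (m := 1) (by norm_num)
  have hF2 := hF1.fderiv_right (m := 0) (by norm_num)
  have t1 : Tendsto (fun j => fderiv ℝ F (a j)) atTop (𝓝 (fderiv ℝ F a0)) :=
    hF1.continuousAt.tendsto.comp ha
  have t2 : Tendsto (fun j => fderiv ℝ (fderiv ℝ F) (a j)) atTop (𝓝 (fderiv ℝ (fderiv ℝ F) a0)) :=
    hF2.continuousAt.tendsto.comp ha
  have tA : ∀ v, Tendsto (fun j => jetA F (a j) (b j) v) atTop (𝓝 (jetA F a0 b0 v)) := fun v =>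
    clm_tendsto t1 (hb.const_smul v)
  have tB : ∀ v w, Tendsto (fun j => jetB F (a j) (b j) (c j) v w) atTop
      (𝓝 (jetB F a0 b0 c0 v w)) := fun v w =>
    (clm_tendsto t1 ((hc.const_smul w).const_smul v)).add
      (clm_tendsto (clm_tendsto t2 (hb.const_smul w)) (hb.const_smul v))
  unfold curvJ
  refine Tendsto.div (Tendsto.const_mul _ (Tendsto.sub (t0.mul ?_) (Tendsto.mul ?_ ?_)))
    (t0.pow 3) (pow_ne_zero 3 hne)
  · exact (((tB 1 1).add ((tB I 1).const_mul I)).div_const 2 |>.sub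
      ((((tB 1 I).add ((tB I I).const_mul I)).div_const 2).const_mul I)).div_const 2
  · exact ((tA 1).sub ((tA I).const_mul I)).div_const 2
  · exact ((tA 1).add ((tA I).const_mul I)).div_const 2

/-- if `f_j → f₀` locally uniformly on `U` and `Z` is a leaf through
`p ∉ f₀⁻¹(0)` of a nowhere-vanishing holomorphic vector field `X`, then `h_{f_j}` is
eventually defined near `T = 0` and the leafwise Gaussian curvatures at `T = 0`
converge: `𝒦_{f_j}(0) → 𝒦_{f₀}(0)`. -/
theorem stmt16 (n : ℕ) (hn : 1 ≤ n)
    (U : Set (EuclideanSpace ℂ (Fin n))) (hU : IsOpen U)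
    (f : ℕ → EuclideanSpace ℂ (Fin n) → ℂ) (f0 : EuclideanSpace ℂ (Fin n) → ℂ)
    (hfj : ∀ j, DifferentiableOn ℂ (f j) U) (hf0 : DifferentiableOn ℂ f0 U)
    (hconv : ∀ K ⊆ U, IsCompact K → TendstoUniformlyOn f f0 atTop K)
    (p : EuclideanSpace ℂ (Fin n)) (hp : p ∈ U) (hf0p : f0 p ≠ 0)
    (V : Set (EuclideanSpace ℂ (Fin n))) (hV : IsOpen V) (hpV : p ∈ V) (hVU : V ⊆ U)
    (X : EuclideanSpace ℂ (Fin n) → EuclideanSpace ℂ (Fin n))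
    (hX : DifferentiableOn ℂ X V) (hXne : ∀ q ∈ V, X q ≠ 0)
    (ε : ℝ) (hε : 0 < ε)
    (Z : ℂ → EuclideanSpace ℂ (Fin n))
    (hZ : DifferentiableOn ℂ Z (Metric.ball 0 ε))
    (hZ0 : Z 0 = p)
    (hZU : ∀ T ∈ Metric.ball (0 : ℂ) ε, Z T ∈ U)
    (hZV : ∀ T ∈ Metric.ball (0 : ℂ) ε, Z T ∈ V)
    (hZ' : ∀ T ∈ Metric.ball (0 : ℂ) ε, deriv Z T = X (Z T))
    (hf0Z : ∀ T ∈ Metric.ball (0 : ℂ) ε, f0 (Z T) ≠ 0) :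
    (∃ N : ℕ, ∀ j ≥ N, ∀ᶠ T in 𝓝 (0 : ℂ), f j (Z T) ≠ 0) ∧
    Tendsto (fun j =>
        gaussCurv (fun T =>
          (1 + ‖f j (Z T)‖ ^ 2 * u (‖f j (Z T)‖ ^ 2) ^ 2) *
            ‖fderiv ℂ (f j) (Z T) (X (Z T))‖ ^ 2 + ‖X (Z T)‖ ^ 2) 0)
      atTop
      (𝓝 (gaussCurv (fun T =>
          (1 + ‖f0 (Z T)‖ ^ 2 * u (‖f0 (Z T)‖ ^ 2) ^ 2) *
            ‖fderiv ℂ f0 (Z T) (X (Z T))‖ ^ 2 + ‖X (Z T)‖ ^ 2) 0)) := by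
  set B := Metric.ball (0 : ℂ) ε with hB
  have hBo : IsOpen B := Metric.isOpen_ball
  have h0 : (0:ℂ) ∈ B := Metric.mem_ball_self hε
  have hBn : B ∈ 𝓝 (0:ℂ) := hBo.mem_nhds h0
  have hXZ : DifferentiableOn ℂ (fun T => X (Z T)) B := hX.comp hZ hZV
  -- the restrictions to the leaf
  have hg : ∀ j, DifferentiableOn ℂ (fun T => f j (Z T)) B := fun j => (hfj j).comp hZ hZU
  have hg0 : DifferentiableOn ℂ (fun T => f0 (Z T)) B := hf0.comp hZ hZU
  have hchain : ∀ φ : EuclideanSpace ℂ (Fin n) → ℂ, DifferentiableOn ℂ φ U → ∀ T ∈ B,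
      fderiv ℂ φ (Z T) (X (Z T)) = deriv (fun T => φ (Z T)) T := by
    intro φ hφ T hT
    have h1 : DifferentiableAt ℂ φ (Z T) := (hφ _ (hZU T hT)).differentiableAt (hU.mem_nhds (hZU T hT))
    have h2 : DifferentiableAt ℂ Z T := (hZ _ hT).differentiableAt (hBo.mem_nhds hT)
    rw [← hZ' T hT]
    exact (fderiv_comp_deriv T h1 h2).symm
  have hlu : TendstoLocallyUniformlyOn (fun j T => f j (Z T)) (fun T => f0 (Z T)) atTop B := by
    rw [tendstoLocallyUniformlyOn_iff_forall_isCompact hBo]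
    intro K hK hKc
    have := (hconv (Z '' K) (by rintro _ ⟨T, hT, rfl⟩; exact hZU T (hK hT))
      (hKc.image_of_continuousOn (hZ.continuousOn.mono hK))).comp Z
    exact this.mono (Set.subset_preimage_image Z K)
  have hlu1 := hlu.deriv (Eventually.of_forall hg) hBo
  have hd1 : ∀ j, DifferentiableOn ℂ (deriv (fun T => f j (Z T))) B := fun j => (hg j).deriv hBo
  have hlu2 := hlu1.deriv (Eventually.of_forall hd1) hBo
  have hd2 : ∀ j, DifferentiableOn ℂ (deriv (deriv (fun T => f j (Z T)))) B :=
    fun j => (hd1 j).deriv hBo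
  have hlu3 := hlu2.deriv (Eventually.of_forall hd2) hBo
  have p0 := hlu.tendsto_at h0
  have p1 := hlu1.tendsto_at h0
  have p2 := hlu2.tendsto_at h0
  have p3 := hlu3.tendsto_at h0
  have hfZ0 : f0 (Z 0) ≠ 0 := hf0Z 0 h0
  have hevne : ∀ᶠ j in atTop, f j (Z 0) ≠ 0 := p0.eventually_ne hfZ0
  constructor
  · obtain ⟨N, hN⟩ := eventually_atTop.1 hevne
    refine ⟨N, fun j hj => ?_⟩
    exact (((hg j) 0 h0).differentiableAt hBn).continuousAt.eventually_ne (hN j hj)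
  let F : ℂ × ℂ × ℂ → ℂ := fun q =>
    (((1 + ‖q.1‖ ^ 2 * u (‖q.1‖ ^ 2) ^ 2) * ‖q.2.1‖ ^ 2 + ‖X (Z q.2.2)‖ ^ 2 : ℝ) : ℂ)
  let L : (ℂ → ℂ) → ℂ → ℂ × ℂ × ℂ := fun g T => (g T, deriv g T, T)
  have hL : ∀ g, DifferentiableOn ℂ g B → AnalyticAt ℂ (L g) 0 ∧
      deriv (L g) 0 = (deriv g 0, deriv (deriv g) 0, 1) ∧
      deriv (deriv (L g)) 0 = (deriv (deriv g) 0, deriv (deriv (deriv g)) 0, 0) := by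
    intro g hg
    have ha : AnalyticAt ℂ g 0 := hg.analyticAt hBn
    have hd : ∀ T ∈ B, deriv (L g) T = (deriv g T, deriv (deriv g) T, 1) := by
      intro T hT
      have a1 : AnalyticAt ℂ g T := hg.analyticAt (hBo.mem_nhds hT)
      exact (a1.differentiableAt.hasDerivAt.prodMk
        (a1.deriv.differentiableAt.hasDerivAt.prodMk (hasDerivAt_id T))).deriv
    refine ⟨ha.prod (ha.deriv.prod analyticAt_id), hd 0 h0, ?_⟩
    have : deriv (L g) =ᶠ[𝓝 0] fun T => (deriv g T, deriv (deriv g) T, (1:ℂ)) := by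
      filter_upwards [hBn] with T hT using hd T hT
    rw [this.deriv_eq]
    exact (ha.deriv.differentiableAt.hasDerivAt.prodMk
        (ha.deriv.deriv.differentiableAt.hasDerivAt.prodMk (hasDerivAt_const (0:ℂ) (1:ℂ)))).deriv
  have hF : ∀ a b : ℂ, a ≠ 0 → ContDiffAt ℝ 2 F (a, b, 0) := by
    intro a b ha
    have c1 : ContDiffAt ℝ 2 (fun q : ℂ × ℂ × ℂ => ‖q.1‖ ^ 2) (a, b, 0) :=
      contDiffAt_fst.norm_sq ℝ
    have c2 : ContDiffAt ℝ 2 (fun q : ℂ × ℂ × ℂ => ‖q.2.1‖ ^ 2) (a, b, 0) :=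
      (contDiffAt_fst.comp _ contDiffAt_snd).norm_sq ℝ
    have c3 : ContDiffAt ℝ 2 (fun q : ℂ × ℂ × ℂ => ‖X (Z q.2.2)‖ ^ 2) (a, b, 0) := by
      have hh : ContDiffAt ℝ 2 (fun T => X (Z T)) 0 :=
        ((hXZ.analyticAt hBn).contDiffAt (n := 2)).restrict_scalars ℝ
      have hq : ContDiffAt ℝ 2 (fun q : ℂ × ℂ × ℂ => X (Z q.2.2)) (a, b, 0) :=
        ContDiffAt.comp (a, b, (0:ℂ)) (g := fun T => X (Z T)) (f := fun q : ℂ × ℂ × ℂ => q.2.2) hh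
          (contDiffAt_snd.comp _ contDiffAt_snd)
      exact hq.norm_sq ℂ
    have c4 : ContDiffAt ℝ 2 (fun q : ℂ × ℂ × ℂ => u (‖q.1‖ ^ 2)) (a, b, 0) :=
      ContDiffAt.comp (a, b, (0:ℂ)) (g := u) (f := fun q : ℂ × ℂ × ℂ => ‖q.1‖ ^ 2)
        (u_contDiffAt (by positivity)) c1
    exact Complex.ofRealCLM.contDiff.contDiffAt.comp _
      (((contDiffAt_const.add (c1.mul (c4.pow 2))).mul c2).add c3)
  have hfin : ∀ φ : EuclideanSpace ℂ (Fin n) → ℂ, DifferentiableOn ℂ φ U → φ (Z 0) ≠ 0 →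
      gaussCurv (fun T =>
          (1 + ‖φ (Z T)‖ ^ 2 * u (‖φ (Z T)‖ ^ 2) ^ 2) *
            ‖fderiv ℂ φ (Z T) (X (Z T))‖ ^ 2 + ‖X (Z T)‖ ^ 2) 0 =
      curvJ F (L (fun T => φ (Z T)) 0) (deriv (L (fun T => φ (Z T))) 0)
        (deriv (deriv (L (fun T => φ (Z T)))) 0) := by
    intro φ hφ hne
    refine gauss_eq _ F (L (fun T => φ (Z T))) (hF _ _ hne) (hL _ (hφ.comp hZ hZU)).1 ?_
    filter_upwards [hBn] with T hT
    simp only [F, L, hchain φ hφ T hT]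
  rw [hfin f0 hf0 hfZ0]
  refine Tendsto.congr' (f₁ := fun j => curvJ F (L (fun T => f j (Z T)) 0)
    (deriv (L (fun T => f j (Z T))) 0) (deriv (deriv (L (fun T => f j (Z T)))) 0)) ?_ ?_
  · filter_upwards [hevne] with j hj
    exact (hfin (f j) (hfj j) hj).symm
  refine curvJ_tendsto F _ _ _ _ _ _ (hF _ _ hfZ0) ?_ ?_ ?_ ?_
  · have hx : X (Z 0) ≠ 0 := hXne _ (hZV 0 h0)
    have : 0 < ‖X (Z 0)‖ := norm_pos_iff.2 hx
    simp only [F, L]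
    norm_cast
    positivity
  · exact p0.prodMk_nhds (p1.prodMk_nhds tendsto_const_nhds)
  · simp only [(hL _ hg0).2.1, fun j => (hL _ (hg j)).2.1]
    exact p1.prodMk_nhds (p2.prodMk_nhds tendsto_const_nhds)
  · simp only [(hL _ hg0).2.2, fun j => (hL _ (hg j)).2.2]
    exact p2.prodMk_nhds (p3.prodMk_nhds tendsto_const_nhds)
end
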